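/- For a t-set (X, ⪯) the following are equivalent: (1) X is a finitely complete t-set; (2) le(X) ≠ ∅ and for all x, y ∈ X, sup({x, y}) ≠ ∅; (3) for every finite subset A of X, sup(A) ≠ ∅; (4) for every finite subset A of X, ub(A) is an upper cone. -/

import Mathlib

/-!
By transitivity `ub(A)` is always an upper set, so it is an upper cone exactly when it has a least
element, i.e. when `sup(A)` is nonempty (`isUpperCone_ubs_iff`). Since `ub(∅) = X`, the conditions
on `X` itself are the case `A = ∅`. The passage from pairs to finite sets is an induction: if
`s ∈ sup(A)` and `t ∈ sup({a, s})`, then `t ∈ sup(A ∪ {a})`, and this uses only transitivity.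
-/

variable {X : Type*}

/-- Upper bounds of `A` w.r.t. the relation `r`. -/
def ubs (r : X → X → Prop) (A : Set X) : Set X := {x | ∀ y ∈ A, r y x}

/-- Lower bounds of `A` w.r.t. the relation `r`. -/
def lbs (r : X → X → Prop) (A : Set X) : Set X := {x | ∀ y ∈ A, r x y}

/-- Least elements of `A`. -/
def les (r : X → X → Prop) (A : Set X) : Set X := {x | x ∈ A ∧ ∀ y ∈ A, r x y}

/-- Largest elements of `A`. -/
def las (r : X → X → Prop) (A : Set X) : Set X := {x | x ∈ A ∧ ∀ y ∈ A, r y x}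

/-- The supremum set `sup(A) = le(ub(A))`. -/
def sups (r : X → X → Prop) (A : Set X) : Set X := les r (ubs r A)

/-- The infimum set `inf(A) = la(lb(A))`. -/
def infs (r : X → X → Prop) (A : Set X) : Set X := las r (lbs r A)

/-- Upper closure `↑(A)`. -/
def upCl (r : X → X → Prop) (A : Set X) : Set X := {x | ∃ y ∈ A, r y x}

/-- `A` is an upper cone: `A = ↑x` for some `x ∈ A`. -/
def IsUpperCone (r : X → X → Prop) (A : Set X) : Prop := ∃ x ∈ A, A = upCl r {x}

/-- `A` is an upper set: `↑(A) ⊆ A`. -/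
def IsUpperSetT (r : X → X → Prop) (A : Set X) : Prop := upCl r A ⊆ A

/-- `A` is directed. -/
def IsDirectedT (r : X → X → Prop) (A : Set X) : Prop :=
  A.Nonempty ∧ ∀ x ∈ A, ∀ y ∈ A, x ≠ y → ∃ z ∈ A, z ∈ ubs r {x, y}

/-- `(X, r)` is a domain t-set: every directed subset has nonempty supremum set. -/
def IsDomainT (r : X → X → Prop) : Prop :=
  ∀ A : Set X, IsDirectedT r A → (sups r A).Nonempty

/-- Bounded complete t-set. -/
def BoundedCompleteT (r : X → X → Prop) : Prop :=
  IsUpperCone r (Set.univ : Set X) ∧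
    ∀ x y : X, ubs r {x, y} = ∅ ∨ IsUpperCone r (ubs r {x, y})

/-- Finitely complete t-set. -/
def FinitelyCompleteT (r : X → X → Prop) : Prop :=
  IsUpperCone r (Set.univ : Set X) ∧ ∀ x y : X, IsUpperCone r (ubs r {x, y})

/-- `A` is finitary: there is a finite `F ⊆ A` with `A ⊆ ↑(F)`. -/
def IsFinitaryT (r : X → X → Prop) (A : Set X) : Prop :=
  ∃ F : Set X, F ⊆ A ∧ F.Finite ∧ A ⊆ upCl r F

/-- Finitarily complete t-set. -/
def FinitarilyCompleteT (r : X → X → Prop) : Prop :=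
  IsFinitaryT r (Set.univ : Set X) ∧ ∀ x y : X, IsFinitaryT r (ubs r {x, y})

/-- Strongly compact subset of a topological t-set. -/
def StronglyCompactT [TopologicalSpace X] (r : X → X → Prop) (A : Set X) : Prop :=
  ∀ O : Set X, IsOpen O → A ⊆ O → ∃ F : Set X, IsFinitaryT r F ∧ A ⊆ F ∧ F ⊆ O

/-- Strongly compactly complete topological t-set. -/
def StronglyCompactlyCompleteT [TopologicalSpace X] (r : X → X → Prop) : Prop :=
  StronglyCompactT r (Set.univ : Set X) ∧ ∀ x y : X, StronglyCompactT r (ubs r {x, y})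

/-- Compactly complete topological t-set. -/
def CompactlyCompleteT [TopologicalSpace X] (r : X → X → Prop) : Prop :=
  IsCompact (Set.univ : Set X) ∧ ∀ x y : X, IsCompact (ubs r {x, y})

theorem ubs_empty (r : X → X → Prop) : ubs r ∅ = Set.univ := by
  simp [ubs]

theorem isUpperCone_ubs_iff (r : X → X → Prop) (htrans : Transitive r) (A : Set X) :
    IsUpperCone r (ubs r A) ↔ (sups r A).Nonempty := by
  constructor
  · rintro ⟨x, hx, hA⟩
    refine ⟨x, hx, fun y hy => ?_⟩
    rw [hA] at hy
    obtain ⟨z, rfl, hz⟩ := hy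
    exact hz
  · rintro ⟨x, hx, hle⟩
    refine ⟨x, hx, Set.Subset.antisymm (fun y hy => ⟨x, rfl, hle y hy⟩) ?_⟩
    rintro y ⟨z, rfl, hzy⟩ w hw
    exact htrans (hx w hw) hzy

theorem sups_insert_nonempty (r : X → X → Prop) (htrans : Transitive r)
    (hpair : ∀ x y : X, (sups r {x, y}).Nonempty) (a : X) {A : Set X}
    (hA : (sups r A).Nonempty) : (sups r (insert a A)).Nonempty := by
  obtain ⟨s, hs, hs_le⟩ := hA
  obtain ⟨t, ht, ht_le⟩ := hpair a s
  refine ⟨t, ?_, fun u hu => ht_le u ?_⟩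
  · rintro y (rfl | hy)
    · exact ht y (Or.inl rfl)
    · exact htrans (hs y hy) (ht s (Or.inr rfl))
  · rintro y (rfl | rfl)
    · exact hu y (Or.inl rfl)
    · exact hs_le u fun y hy => hu y (Or.inr hy)

/-- Characterizations of finitely complete t-sets. -/
theorem finitelyComplete_tfae [Nonempty X] (r : X → X → Prop) (htrans : Transitive r) :
    List.TFAE
      [FinitelyCompleteT r,
       (les r (Set.univ : Set X)).Nonempty ∧ ∀ x y : X, (sups r {x, y}).Nonempty,
       ∀ A : Set X, A.Finite → (sups r A).Nonempty,
       ∀ A : Set X, A.Finite → IsUpperCone r (ubs r A)] := by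
  have hcone := isUpperCone_ubs_iff r htrans
  tfae_have 1 ↔ 2 := by
    have h0 := hcone ∅
    rw [sups, ubs_empty] at h0
    simp only [FinitelyCompleteT, h0, hcone]
  tfae_have 2 → 3 := by
    rintro ⟨hX, hpair⟩ A hA
    induction A, hA using Set.Finite.induction_on with
    | empty => rwa [sups, ubs_empty]
    | insert _ _ ih => exact sups_insert_nonempty r htrans hpair _ ih
  tfae_have 3 → 2 := by
    intro h
    refine ⟨?_, fun x y => h _ (Set.toFinite _)⟩
    simpa only [sups, ubs_empty] using h ∅ Set.finite_empty
  tfae_have 3 ↔ 4 := by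
    simp only [hcone]
  tfae_finish
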